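/- Let x : Fin 11 → ℝ^10 be a regular 11-simplex and let C2 be a clique of order 10 in the graph on Y1. Then the 90-element set Z splits as a disjoint union Z = Z1 ∪ Z2 with |Z1| = |Z2| = 45 such that every two distinct vectors within the same part Zi have inner product in {α1, α2, α3}, while ⟨z1, z2⟩ ∉ {α1, α2, α3} for every z1 ∈ Z1 and every z2 ∈ Z2. -/

import Mathlib

open RealInnerProductSpace

noncomputable section

/-- The three admissible inner product values (angles). -/
def α1 : ℝ := 4/15
def α2 : ℝ := -1/10
def α3 : ℝ := -7/15

/-- A regular 11-simplex in ℝ^10: eleven unit vectors with pairwise inner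
products equal to -1/10. -/
def IsRegularSimplex (x : Fin 11 → EuclideanSpace ℝ (Fin 10)) : Prop :=
  (∀ i, ‖x i‖ = 1) ∧ ∀ i j : Fin 11, i ≠ j → ⟪x i, x j⟫ = -1/10

/-- The set `Y1`: unit vectors `y` with `⟪x 0, y⟫ = α2` such that among the
indices `i ≠ 0`, exactly six satisfy `⟪x i, y⟫ = α1`, exactly one satisfies
`⟪x i, y⟫ = α2`, and exactly three satisfy `⟪x i, y⟫ = α3`. -/
def Y1set (x : Fin 11 → EuclideanSpace ℝ (Fin 10)) : Set (EuclideanSpace ℝ (Fin 10)) :=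
  {y | ‖y‖ = 1 ∧ ⟪x 0, y⟫ = α2 ∧
    {i : Fin 11 | i ≠ 0 ∧ ⟪x i, y⟫ = α1}.ncard = 6 ∧
    {i : Fin 11 | i ≠ 0 ∧ ⟪x i, y⟫ = α2}.ncard = 1 ∧
    {i : Fin 11 | i ≠ 0 ∧ ⟪x i, y⟫ = α3}.ncard = 3}

/-- A clique of order 10 in the graph on `Y1` in which two distinct vectors are
adjacent iff their inner product equals `α2`. -/
def IsClique10 (x : Fin 11 → EuclideanSpace ℝ (Fin 10))
    (D : Set (EuclideanSpace ℝ (Fin 10))) : Prop :=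
  D ⊆ Y1set x ∧ D.ncard = 10 ∧
    ∀ y ∈ D, ∀ y' ∈ D, y ≠ y' → ⟪y, y'⟫ = α2

/-- The set `Y`: unit vectors `u ∉ C2` whose inner products with
`x 0, …, x 10` take the value `α1` exactly six times, `α2` exactly twice, and
`α3` exactly three times. -/
def Yset (x : Fin 11 → EuclideanSpace ℝ (Fin 10))
    (C2 : Set (EuclideanSpace ℝ (Fin 10))) : Set (EuclideanSpace ℝ (Fin 10)) :=
  {u | ‖u‖ = 1 ∧ u ∉ C2 ∧
    {i : Fin 11 | ⟪x i, u⟫ = α1}.ncard = 6 ∧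
    {i : Fin 11 | ⟪x i, u⟫ = α2}.ncard = 2 ∧
    {i : Fin 11 | ⟪x i, u⟫ = α3}.ncard = 3}

/-- The set `Z`: vectors of `Y` whose inner products with all vectors of `C2`
lie in `{α1, α2, α3}`. -/
def Zset (x : Fin 11 → EuclideanSpace ℝ (Fin 10))
    (C2 : Set (EuclideanSpace ℝ (Fin 10))) : Set (EuclideanSpace ℝ (Fin 10)) :=
  {u ∈ Yset x C2 | ∀ w ∈ C2, ⟪u, w⟫ ∈ ({α1, α2, α3} : Set ℝ)}

namespace SimplexCode

/-- The words of length `n` over `{0, 1, 2}` with `p` twos, `z` ones and `m` zeros,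
where `n = p + z + m`. -/
def words : ℕ → ℕ → ℕ → ℕ → List (List ℕ)
  | 0, _, _, _ => [[]]
  | n + 1, p, z, m =>
    (if p = 0 then [] else (words n (p - 1) z m).map (2 :: ·)) ++
    ((if z = 0 then [] else (words n p (z - 1) m).map (1 :: ·)) ++
    (if m = 0 then [] else (words n p z (m - 1)).map (0 :: ·)))

/-- The dot product of two words. -/
def dot : List ℕ → List ℕ → ℕ
  | a :: l, b :: m => a * b + dot l m
  | _, _ => 0

/-- The dot products of codes that correspond to the three admissible inner products. -/
def admissible (d : ℕ) : Bool := Nat.beq d 14 || Nat.beq d 17 || Nat.beq d 20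

/-- The columns of the matrix whose rows are the words in `R`. -/
def cols (R : List (List ℕ)) : List (List ℕ) :=
  List.ofFn fun i : Fin 11 => R.map (·.getD i 0)

/-! Rows of the Seidel matrix of the Petersen graph with entries `1`, `0`, `-1` written as
`2`, `1`, `0`, preceded by the distinguished coordinate. -/

def row0 : List ℕ := [1, 1, 2, 2, 2, 2, 2, 2, 0, 0, 0]
def row1 : List ℕ := [1, 2, 1, 2, 2, 2, 0, 0, 2, 2, 0]
def row7 : List ℕ := [1, 0, 2, 2, 0, 2, 2, 0, 1, 2, 2]
def row8 : List ℕ := [1, 0, 2, 0, 2, 2, 0, 2, 2, 1, 2]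

/-- The marker of the distinguished coordinate. -/
def marker : List ℕ := [1, 0, 0, 0, 0, 0, 0, 0, 0, 0, 0]

/-- The codes of the standard ten-clique. -/
def canon : List (List ℕ) :=
  [row0, row1,
   [1, 2, 2, 1, 2, 0, 2, 0, 2, 0, 2],
   [1, 2, 2, 2, 1, 0, 0, 2, 0, 2, 2],
   [1, 2, 2, 0, 0, 1, 2, 2, 2, 2, 0],
   [1, 2, 0, 2, 0, 2, 1, 2, 2, 0, 2],
   [1, 2, 0, 0, 2, 2, 2, 1, 0, 2, 2],
   row7, row8,
   [1, 0, 0, 2, 2, 0, 2, 2, 2, 2, 1]]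

/-- The words of the type of an element of the clique that have a one in position `j` and are
orthogonal to the words in `R`. -/
def candidates (R : List (List ℕ)) (j : ℕ) : List (List ℕ) :=
  (words 11 6 2 3).filter fun v =>
    Nat.beq (v.getD 0 0) 1 && Nat.beq (v.getD j 0) 1 && R.all fun s => Nat.beq (dot v s) 17

/-- Every candidate extending `R` agrees with `r` up to a permutation of the positions
that fixes position `0` and the words in `R`. -/
def Extends (R : List (List ℕ)) (r : List ℕ) (j : ℕ) : Prop :=
  ∀ v ∈ candidates R j, (cols (marker :: v :: R)).Perm (cols (marker :: r :: R))

instance (R : List (List ℕ)) (r : List ℕ) (j : ℕ) : Decidable (Extends R r j) :=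
  inferInstanceAs (Decidable (∀ v ∈ candidates R j, _))

theorem extends_row0 : Extends [] row0 1 := by decide +kernel
theorem extends_row7 : Extends [row0] row7 8 := by decide +kernel
theorem extends_row8 : Extends [row7, row0] row8 9 := by decide +kernel
theorem extends_row1 : Extends [row8, row7, row0] row1 2 := by decide +kernel

/-- A code that coincides with or is orthogonal to each of four rows is in the standard clique. -/
theorem mem_canon_of_dot : ∀ v ∈ (words 11 6 2 3).filter (fun v => Nat.beq (v.getD 0 0) 1 &&
      [row1, row8, row7, row0].all fun s => Nat.beq (dot v s) 26 || Nat.beq (dot v s) 17),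
    v ∈ canon := by
  decide +kernel

/-- The words whose dot products with all words of the standard clique are admissible. -/
def admissibleWords : List (List ℕ) :=
  (words 11 6 2 3).filter fun v => canon.all fun r => admissible (dot v r)

/-- One of the admissible words. -/
def base : List ℕ := [2, 2, 2, 2, 0, 2, 0, 2, 1, 1, 0]

/-- Whether a word equals `base` or has an admissible dot product with it. -/
def near (v : List ℕ) : Bool := Nat.beq (dot base v) 26 || admissible (dot base v)

/-- The admissible words split into the words near `base` and the remaining ones. -/
theorem admissibleWords_split :
    let A := admissibleWords.filter near
    let B := admissibleWords.filter (! near ·)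
    A.length = 45 ∧ B.length = 45 ∧
    A.Pairwise (fun u v => admissible (dot u v)) ∧
    B.Pairwise (fun u v => admissible (dot u v)) ∧
    ∀ u ∈ A, ∀ v ∈ B, admissible (dot u v) = false := by
  decide +kernel

/-! ### Words -/

theorem mem_words {n p z m : ℕ} (h : n = p + z + m) (l : List ℕ) :
    l ∈ words n p z m ↔ l.length = n ∧ l.count 2 = p ∧ l.count 1 = z ∧ l.count 0 = m := by
  induction n generalizing p z m l with
  | zero =>
    obtain ⟨rfl, rfl, rfl⟩ : p = 0 ∧ z = 0 ∧ m = 0 := by omega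
    simp only [words, List.mem_singleton, List.length_eq_zero_iff]
    constructor
    · rintro rfl; simp
    · exact fun h => h.1
  | succ n ih =>
    have key : ∀ (q : ℕ) (b : ℕ) (L : List (List ℕ)),
        l ∈ (if q = 0 then [] else L.map (b :: ·)) ↔ q ≠ 0 ∧ ∃ t ∈ L, b :: t = l := by
      intro q b L
      split_ifs with hq <;> simp [hq]
    simp only [words, List.mem_append, key]
    constructor
    · rintro (⟨hp, t, ht, rfl⟩ | ⟨hz, t, ht, rfl⟩ | ⟨hm, t, ht, rfl⟩)
      all_goals
        rw [ih (by omega)] at ht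
        simp only [List.length_cons, List.count_cons, ht]
        simp
        omega
    · rintro ⟨hl, hp, hz, hm⟩
      obtain _ | ⟨b, t⟩ := l
      · simp at hl
      simp only [List.length_cons, List.count_cons, beq_iff_eq] at hl hp hz hm
      have hb : b = 2 ∨ b = 1 ∨ b = 0 := by
        by_contra! hb
        have hle : t.count 2 + t.count 1 + t.count 0 ≤ t.length := by
          clear * -
          induction t with
          | nil => simp
          | cons c t iht =>
            simp only [List.count_cons, List.length_cons, beq_iff_eq]
            split_ifs <;> omega
        simp only [hb, if_false] at hp hz hm
        omega
      rcases hb with rfl | rfl | rfl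
      · exact Or.inl ⟨by simp at hp; omega, t, (ih (by simp at hp; omega) t).2
          (by simp at hp hz hm; omega), rfl⟩
      · exact Or.inr (Or.inl ⟨by simp at hz; omega, t, (ih (by simp at hz; omega) t).2
          (by simp at hp hz hm; omega), rfl⟩)
      · exact Or.inr (Or.inr ⟨by simp at hm; omega, t, (ih (by simp at hm; omega) t).2
          (by simp at hp hz hm; omega), rfl⟩)

theorem count_ofFn {γ : Type*} [DecidableEq γ] {n : ℕ} (f : Fin n → γ) (c : γ) :
    (List.ofFn f).count c = (Finset.univ.filter fun i => f i = c).card := by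
  rw [← Multiset.coe_count, ← Fin.univ_val_map, Multiset.count_map, Finset.card_def,
    Finset.filter_val]
  simp only [eq_comm]

theorem dot_ofFn {n : ℕ} (a b : Fin n → ℕ) :
    dot (List.ofFn a) (List.ofFn b) = ∑ i, a i * b i := by
  induction n with
  | zero => simp [dot]
  | succ n ih => simp [List.ofFn_succ, dot, Fin.sum_univ_succ, ih]

theorem getD_ofFn {n : ℕ} (a : Fin n → ℕ) (i : Fin n) : (List.ofFn a).getD i 0 = a i := by
  simp [List.getD]

theorem ofFn_getD {l : List ℕ} {n : ℕ} (hl : l.length = n) :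
    List.ofFn (fun i : Fin n => l.getD i 0) = l := by
  subst hl
  apply List.ext_getElem <;> simp

/-- A code: six twos, two ones and three zeros. -/
def IsCode (a : Fin 11 → ℕ) : Prop := List.ofFn a ∈ words 11 6 2 3

theorem isCode_iff {a : Fin 11 → ℕ} : IsCode a ↔
    (Finset.univ.filter fun i => a i = 2).card = 6 ∧
    (Finset.univ.filter fun i => a i = 1).card = 2 ∧
    (Finset.univ.filter fun i => a i = 0).card = 3 := by
  rw [IsCode, mem_words (n := 11) (p := 6) (z := 2) (m := 3) rfl, count_ofFn, count_ofFn,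
    count_ofFn, List.length_ofFn]
  exact and_iff_right rfl

theorem IsCode.comp {a : Fin 11 → ℕ} (h : IsCode a) (σ : Equiv.Perm (Fin 11)) :
    IsCode (a ∘ σ) := by
  rw [IsCode, mem_words (n := 11) (p := 6) (z := 2) (m := 3) rfl] at h ⊢
  have hp := σ.ofFn_comp_perm a
  simpa only [hp.count_eq, hp.length_eq] using h

theorem IsCode.le_two {a : Fin 11 → ℕ} (h : IsCode a) (i : Fin 11) :
    a i = 2 ∨ a i = 1 ∨ a i = 0 := by
  rw [isCode_iff] at h
  by_contra! hi
  have hsub : (Finset.univ.filter fun i => a i = 2) ∪ (Finset.univ.filter fun i => a i = 1) ∪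
      (Finset.univ.filter fun i => a i = 0) ⊆ Finset.univ.erase i := by
    intro j hj
    simp only [Finset.mem_union, Finset.mem_filter, Finset.mem_univ, true_and] at hj
    simp only [Finset.mem_erase, Finset.mem_univ, and_true]
    rintro rfl
    omega
  have hcard := Finset.card_le_card hsub
  rw [Finset.card_union_of_disjoint, Finset.card_union_of_disjoint, h.1, h.2.1, h.2.2,
    Finset.card_erase_of_mem (Finset.mem_univ _)] at hcard
  · simp at hcard
  all_goals
    rw [Finset.disjoint_left]
    intro j
    simp only [Finset.mem_union, Finset.mem_filter, Finset.mem_univ, true_and]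
    omega

theorem IsCode.sum_comp {M : Type*} [AddCommMonoid M] {a : Fin 11 → ℕ} (h : IsCode a)
    (φ : ℕ → M) : ∑ i, φ (a i) = 6 • φ 2 + 2 • φ 1 + 3 • φ 0 := by
  have hi : ∀ i, φ (a i) = (if a i = 2 then φ 2 else 0) + (if a i = 1 then φ 1 else 0) +
      (if a i = 0 then φ 0 else 0) := by
    intro i
    rcases h.le_two i with hi | hi | hi <;> simp [hi]
  rw [isCode_iff] at h
  rw [Finset.sum_congr rfl fun i _ => hi i, Finset.sum_add_distrib, Finset.sum_add_distrib]
  simp only [← Finset.sum_filter, Finset.sum_const, h]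

theorem IsCode.sum_eq {a : Fin 11 → ℕ} (h : IsCode a) : ∑ i, a i = 14 := by
  simpa using h.sum_comp id

theorem IsCode.dot_self {a : Fin 11 → ℕ} (h : IsCode a) :
    dot (List.ofFn a) (List.ofFn a) = 26 := by
  rw [dot_ofFn]
  simpa using h.sum_comp fun t => t * t

theorem dot_comm : ∀ l m : List ℕ, dot l m = dot m l
  | [], [] => rfl
  | [], _ :: _ => rfl
  | _ :: _, [] => rfl
  | a :: l, b :: m => by simp only [dot, dot_comm l m, Nat.mul_comm]

theorem dot_comp_perm {n : ℕ} (a b : Fin n → ℕ) (σ : Equiv.Perm (Fin n)) :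
    dot (List.ofFn (a ∘ σ)) (List.ofFn (b ∘ σ)) = dot (List.ofFn a) (List.ofFn b) := by
  simp only [dot_ofFn, Function.comp_apply]
  exact Equiv.sum_comp σ fun i => a i * b i

theorem exists_perm_of_perm_ofFn {γ : Type*} [DecidableEq γ] {n : ℕ} {f g : Fin n → γ}
    (h : (List.ofFn f).Perm (List.ofFn g)) : ∃ σ : Equiv.Perm (Fin n), ∀ i, f (σ i) = g i := by
  have hcard : ∀ c, Nonempty ({i // g i = c} ≃ {i // f i = c}) := fun c => by
    rw [← Fintype.card_eq, Fintype.card_subtype, Fintype.card_subtype, ← count_ofFn,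
      ← count_ofFn, h.count_eq]
  let e := fun c => (hcard c).some
  refine ⟨(Equiv.sigmaFiberEquiv g).symm.trans
    ((Equiv.sigmaCongrRight e).trans (Equiv.sigmaFiberEquiv f)), fun i => ?_⟩
  exact (e (g i) ⟨i, rfl⟩).2

/-! ### Classification of the cliques -/

/-- The codes of the vectors of a ten-clique. -/
structure IsConfig (w : Fin 10 → Fin 11 → ℕ) : Prop where
  isCode : ∀ k, IsCode (w k)
  zero : ∀ k, w k 0 = 1
  dot_eq : ∀ k l, k ≠ l → dot (List.ofFn (w k)) (List.ofFn (w l)) = 17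

namespace IsConfig

variable {w : Fin 10 → Fin 11 → ℕ}

theorem comp (hw : IsConfig w) {σ : Equiv.Perm (Fin 11)} (hσ : σ 0 = 0) :
    IsConfig fun k => w k ∘ σ where
  isCode k := (hw.isCode k).comp σ
  zero k := by simp [hσ, hw.zero]
  dot_eq k l hkl := by rw [dot_comp_perm, hw.dot_eq k l hkl]

/-- The centred codes form a weighing matrix, whose transpose is again a weighing matrix;
hence each of its columns has a zero. -/
theorem exists_eq_one (hw : IsConfig w) {j : Fin 11} (hj : j ≠ 0) : ∃ k, w k j = 1 := by
  obtain ⟨j, rfl⟩ := Fin.exists_succ_eq.2 hj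
  let M : Matrix (Fin 10) (Fin 10) ℚ := fun k i => (w k i.succ : ℚ) - 1
  have hM : M * M.transpose = (9 : ℚ) • 1 := by
    ext k l
    have hsum : ∑ i : Fin 10, M k i * M l i = ∑ i, ((w k i : ℚ) - 1) * ((w l i : ℚ) - 1) := by
      rw [Fin.sum_univ_succ (n := 10)]
      simp [M, hw.zero]
    have hd : ∑ i, ((w k i : ℚ) - 1) * ((w l i : ℚ) - 1) =
        (dot (List.ofFn (w k)) (List.ofFn (w l)) : ℚ) - 17 := by
      have hk : ∑ i, (w k i : ℚ) = 14 := mod_cast (hw.isCode k).sum_eq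
      have hl : ∑ i, (w l i : ℚ) = 14 := mod_cast (hw.isCode l).sum_eq
      rw [dot_ofFn]
      push_cast
      have : ∀ i, ((w k i : ℚ) - 1) * ((w l i : ℚ) - 1) = w k i * w l i - w k i - w l i + 1 :=
        fun i => by ring
      simp only [this, Finset.sum_add_distrib, Finset.sum_sub_distrib, hk, hl]
      simp
      ring
    rw [Matrix.mul_apply]
    simp only [Matrix.transpose_apply]
    rw [hsum, hd]
    by_cases hkl : k = l
    · subst hkl
      rw [(hw.isCode k).dot_self]
      norm_num
    · rw [hw.dot_eq k l hkl]
      simp [hkl]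
  have hM' : M.transpose * ((1 / 9 : ℚ) • M) = 1 := by
    rw [mul_eq_one_comm, Matrix.smul_mul, hM, smul_smul]
    norm_num
  have hjj := congrFun (congrFun hM' j) j
  rw [Matrix.mul_apply] at hjj
  by_contra! hne
  have hone : ∀ k, M.transpose j k * ((1 / 9 : ℚ) • M) k j = 1 / 9 := by
    intro k
    change ((w k j.succ : ℚ) - 1) * ((1 / 9) * ((w k j.succ : ℚ) - 1)) = 1 / 9
    rcases (hw.isCode k).le_two j.succ with h | h | h
    · norm_num [h]
    · exact absurd h (hne k)
    · norm_num [h]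
  simp only [hone] at hjj
  norm_num at hjj

theorem extend (hw : IsConfig w) {R : List (List ℕ)} {r : List ℕ} {j : Fin 11} (hj : j ≠ 0)
    (hE : Extends R r j) (hr : r.length = 11) (hRj : ∀ s ∈ R, s.getD j 0 ≠ 1)
    (hR : ∀ s ∈ R, ∃ k, List.ofFn (w k) = s) :
    ∃ σ : Equiv.Perm (Fin 11), σ 0 = 0 ∧ ∀ s ∈ r :: R, ∃ k, List.ofFn (w k ∘ σ) = s := by
  obtain ⟨k, hk⟩ := hw.exists_eq_one hj
  have hmem : List.ofFn (w k) ∈ candidates R j := by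
    simp only [candidates, List.mem_filter, Bool.and_eq_true, Nat.beq_eq, List.all_eq_true]
    refine ⟨hw.isCode k, ⟨?_, ?_⟩, fun s hs => ?_⟩
    · exact (getD_ofFn (w k) 0).trans (hw.zero k)
    · rw [getD_ofFn, hk]
    · obtain ⟨l, rfl⟩ := hR s hs
      refine hw.dot_eq k l ?_
      rintro rfl
      exact hRj _ hs (by rw [getD_ofFn, hk])
  obtain ⟨σ, hσ⟩ := exists_perm_of_perm_ofFn (hE _ hmem)
  simp only [List.map_cons, List.cons.injEq, getD_ofFn] at hσ
  have hσ0 : σ 0 = 0 := by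
    have h0 := (hσ 0).1
    revert h0
    generalize σ 0 = i
    revert i
    decide
  refine ⟨σ, hσ0, List.forall_mem_cons.2 ⟨⟨k, ?_⟩, fun s hs => ?_⟩⟩
  · rw [← ofFn_getD hr]
    exact congrArg _ (funext fun i => (hσ i).2.1)
  · obtain ⟨l, rfl⟩ := hR s hs
    refine ⟨l, congrArg _ (funext fun i => ?_)⟩
    have := List.map_inj_left.1 (hσ i).2.2 _ hs
    simpa only [getD_ofFn, Function.comp_apply] using this

theorem exists_perm_eq_canon (hw : IsConfig w) :
    ∃ σ : Equiv.Perm (Fin 11), σ 0 = 0 ∧ ∀ s, s ∈ canon ↔ ∃ k, List.ofFn (w k ∘ σ) = s := by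
  obtain ⟨σ₀, h₀, H₀⟩ := hw.extend (j := 1) (by decide) extends_row0 rfl (by simp) (by simp)
  obtain ⟨σ₇, h₇, H₇⟩ := (hw.comp h₀).extend (j := 8) (by decide) extends_row7 rfl
    (by decide) H₀
  obtain ⟨σ₈, h₈, H₈⟩ := ((hw.comp h₀).comp h₇).extend (j := 9) (by decide) extends_row8 rfl
    (by decide) H₇
  obtain ⟨σ₁, h₁, H₁⟩ := (((hw.comp h₀).comp h₇).comp h₈).extend (j := 2) (by decide)
    extends_row1 rfl (by decide) H₈
  let σ := σ₀ * σ₇ * σ₈ * σ₁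
  have hσ : σ 0 = 0 := by simp [σ, h₀, h₇, h₈, h₁]
  have hwσ := hw.comp hσ
  have hmem : ∀ k, List.ofFn (w k ∘ σ) ∈ canon := by
    intro k
    refine mem_canon_of_dot _ ?_
    simp only [List.mem_filter, Bool.and_eq_true, Nat.beq_eq, List.all_eq_true, Bool.or_eq_true]
    refine ⟨hwσ.isCode k, (getD_ofFn (w k ∘ σ) 0).trans (hwσ.zero k), fun s hs => ?_⟩
    obtain ⟨l, rfl⟩ := H₁ s hs
    change dot _ (List.ofFn (w l ∘ σ)) = 26 ∨ dot _ (List.ofFn (w l ∘ σ)) = 17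
    by_cases hkl : k = l
    · subst hkl
      exact Or.inl (hwσ.isCode k).dot_self
    · exact Or.inr (hwσ.dot_eq k l hkl)
  have hinj : Function.Injective fun k => List.ofFn (w k ∘ σ) := by
    intro k l hkl
    by_contra hne
    have h17 := hwσ.dot_eq k l hne
    simp only at hkl
    rw [← hkl, (hwσ.isCode k).dot_self] at h17
    omega
  have himage : Finset.univ.image (fun k => List.ofFn (w k ∘ σ)) = canon.toFinset := by
    refine Finset.eq_of_subset_of_card_le ?_ ?_
    · intro s hs
      obtain ⟨k, -, rfl⟩ := Finset.mem_image.1 hs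
      exact List.mem_toFinset.2 (hmem k)
    · rw [Finset.card_image_of_injective _ hinj]
      exact (List.toFinset_card_le canon).trans (by simp [canon])
  refine ⟨σ, hσ, fun s => ?_⟩
  rw [← List.mem_toFinset, ← himage]
  simp

end IsConfig

end SimplexCode

/-! ### Regular simplices -/

namespace IsRegularSimplex

open SimplexCode

variable {x : Fin 11 → EuclideanSpace ℝ (Fin 10)}

theorem comp (hx : IsRegularSimplex x) (σ : Equiv.Perm (Fin 11)) :
    IsRegularSimplex fun i => x (σ i) :=
  ⟨fun _ => hx.1 _, fun _ _ hij => hx.2 _ _ (σ.injective.ne hij)⟩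

theorem inner_sum_smul (hx : IsRegularSimplex x) (c : Fin 11 → ℝ) (j : Fin 11) :
    ⟪x j, ∑ i, c i • x i⟫ = 11 / 10 * c j - 1 / 10 * ∑ i, c i := by
  have h : ∀ i, ⟪x j, c i • x i⟫ = 11 / 10 * (if j = i then c i else 0) - 1 / 10 * c i := by
    intro i
    rw [real_inner_smul_right]
    split_ifs with hij
    · subst hij
      rw [real_inner_self_eq_norm_sq, hx.1]
      ring
    · rw [hx.2 _ _ hij]
      ring
  rw [inner_sum, Finset.sum_congr rfl fun i _ => h i, Finset.sum_sub_distrib, ← Finset.mul_sum,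
    ← Finset.mul_sum]
  simp

theorem sum_eq_zero (hx : IsRegularSimplex x) : ∑ i, x i = 0 := by
  have h : ∀ j, ⟪x j, ∑ i, x i⟫ = 0 := by
    intro j
    have := hx.inner_sum_smul (fun _ => 1) j
    simp only [one_smul] at this
    rw [this]
    simp
    norm_num
  rw [← inner_self_eq_zero (𝕜 := ℝ), sum_inner]
  exact Finset.sum_eq_zero fun j _ => h j

theorem span_eq_top (hx : IsRegularSimplex x) : Submodule.span ℝ (Set.range x) = ⊤ := by
  have hli : LinearIndependent ℝ fun i : Fin 10 => x i.succ := by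
    rw [Fintype.linearIndependent_iff]
    intro c hc
    have h : ∀ j : Fin 10, 11 / 10 * c j - 1 / 10 * ∑ i, c i = 0 := by
      intro j
      have := hx.inner_sum_smul (Fin.cons 0 c) j.succ
      rw [Fin.sum_univ_succ (n := 10), Fin.sum_univ_succ (n := 10)] at this
      simp only [Fin.cons_zero, Fin.cons_succ, zero_smul, zero_add, hc, inner_zero_right] at this
      exact this.symm
    have hs : ∑ j : Fin 10, (11 / 10 * c j - 1 / 10 * ∑ i, c i) = 0 :=
      Finset.sum_eq_zero fun j _ => h j
    rw [Finset.sum_sub_distrib, ← Finset.mul_sum] at hs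
    simp only [Finset.sum_const, Finset.card_univ, Fintype.card_fin, nsmul_eq_mul] at hs
    push_cast at hs
    intro i
    have := h i
    linarith
  have htop := hli.span_eq_top_of_card_eq_finrank (by simp)
  rw [eq_top_iff, ← htop]
  exact Submodule.span_mono (by rintro _ ⟨i, rfl⟩; exact ⟨_, rfl⟩)

/-- A regular simplex is a tight frame. -/
theorem sum_inner_smul (hx : IsRegularSimplex x) (u : EuclideanSpace ℝ (Fin 10)) :
    ∑ i, ⟪x i, u⟫ • x i = (11 / 10 : ℝ) • u := by
  have hu : u ∈ Submodule.span ℝ (Set.range x) := hx.span_eq_top ▸ Submodule.mem_top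
  induction hu using Submodule.span_induction with
  | mem u hu =>
    obtain ⟨j, rfl⟩ := hu
    have h : ∀ i, ⟪x i, x j⟫ • x i =
        (11 / 10 : ℝ) • (if i = j then x i else 0) - (1 / 10 : ℝ) • x i := by
      intro i
      split_ifs with hij
      · subst hij
        rw [real_inner_self_eq_norm_sq, hx.1, ← sub_smul]
        norm_num
      · rw [hx.2 _ _ hij, smul_zero, zero_sub, ← neg_smul]
        norm_num
    rw [Finset.sum_congr rfl fun i _ => h i, Finset.sum_sub_distrib, ← Finset.smul_sum,
      ← Finset.smul_sum, hx.sum_eq_zero]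
    simp
  | zero => simp
  | add u v _ _ hu hv =>
    simp only [inner_add_right, add_smul, Finset.sum_add_distrib, hu, hv, smul_add]
  | smul c u _ hu =>
    simp only [real_inner_smul_right, mul_smul, ← Finset.smul_sum, hu]
    rw [smul_comm]

theorem inner_eq_sum (hx : IsRegularSimplex x) (u v : EuclideanSpace ℝ (Fin 10)) :
    ⟪u, v⟫ = 10 / 11 * ∑ i, ⟪x i, u⟫ * ⟪x i, v⟫ := by
  have h := congrArg (fun t => ⟪t, v⟫) (hx.sum_inner_smul u)
  simp only [sum_inner, real_inner_smul_left] at h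
  rw [h]
  ring

theorem ext_inner (hx : IsRegularSimplex x) {u v : EuclideanSpace ℝ (Fin 10)}
    (h : ∀ i, ⟪x i, u⟫ = ⟪x i, v⟫) : u = v := by
  have hsum := hx.sum_inner_smul u
  simp only [h, hx.sum_inner_smul v] at hsum
  exact (smul_right_injective _ (by norm_num : (11 / 10 : ℝ) ≠ 0) hsum).symm

end IsRegularSimplex

namespace SimplexCode

/-- The inner product encoded by the digits `0`, `1`, `2`. -/
def value (t : ℕ) : ℝ := (11 * t - 14) / 30

theorem value_injective : Function.Injective value := by
  intro s t h
  have : (s : ℝ) = t := by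
    simp only [value] at h
    linarith
  exact_mod_cast this

theorem value_two : value 2 = α1 := by norm_num [value, α1]
theorem value_one : value 1 = α2 := by norm_num [value, α2]
theorem value_zero : value 0 = α3 := by norm_num [value, α3]

/-- The inner products of `u` with the simplex `x` are encoded by `a`. -/
def HasCode (x : Fin 11 → EuclideanSpace ℝ (Fin 10)) (u : EuclideanSpace ℝ (Fin 10))
    (a : Fin 11 → ℕ) : Prop := ∀ i, ⟪x i, u⟫ = value (a i)

theorem HasCode.unique {x : Fin 11 → EuclideanSpace ℝ (Fin 10)} {u : EuclideanSpace ℝ (Fin 10)}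
    {a b : Fin 11 → ℕ} (ha : HasCode x u a) (hb : HasCode x u b) : a = b :=
  funext fun i => value_injective ((ha i).symm.trans (hb i))

/-- The inner products of `u` with `x` have the type of an element of `Y`. -/
def HasType (x : Fin 11 → EuclideanSpace ℝ (Fin 10)) (u : EuclideanSpace ℝ (Fin 10)) : Prop :=
  {i : Fin 11 | ⟪x i, u⟫ = α1}.ncard = 6 ∧ {i : Fin 11 | ⟪x i, u⟫ = α2}.ncard = 2 ∧
    {i : Fin 11 | ⟪x i, u⟫ = α3}.ncard = 3

section

variable {x : Fin 11 → EuclideanSpace ℝ (Fin 10)} {u v : EuclideanSpace ℝ (Fin 10)}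
  {a b : Fin 11 → ℕ}

theorem HasCode.hasType (hu : HasCode x u a) (ha : IsCode a) : HasType x u := by
  rw [isCode_iff] at ha
  simp only [HasType, ← value_two, ← value_one, ← value_zero, hu _, value_injective.eq_iff]
  simpa [Set.ncard_eq_toFinset_card'] using ha

theorem HasType.exists_code (h : HasType x u) : ∃ a, IsCode a ∧ HasCode x u a := by
  classical
  have h12 : α1 ≠ α2 := by norm_num [α1, α2]
  have h13 : α1 ≠ α3 := by norm_num [α1, α3]
  have h23 : α2 ≠ α3 := by norm_num [α2, α3]
  let a : Fin 11 → ℕ := fun i =>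
    if ⟪x i, u⟫ = α1 then 2 else if ⟪x i, u⟫ = α2 then 1 else if ⟪x i, u⟫ = α3 then 0 else 3
  have h2 : ∀ i, a i = 2 ↔ ⟪x i, u⟫ = α1 := by
    intro i; simp only [a]; split_ifs <;> simp_all
  have h1 : ∀ i, a i = 1 ↔ ⟪x i, u⟫ = α2 := by
    intro i; simp only [a]; split_ifs <;> simp_all
  have h0 : ∀ i, a i = 0 ↔ ⟪x i, u⟫ = α3 := by
    intro i; simp only [a]; split_ifs <;> simp_all
  have ha : IsCode a := by
    rw [isCode_iff]
    simp only [HasType, ← h2, ← h1, ← h0] at h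
    simpa [Set.ncard_eq_toFinset_card'] using h
  refine ⟨a, ha, fun i => ?_⟩
  rcases ha.le_two i with hi | hi | hi <;> rw [hi]
  · rw [value_two, ← h2, hi]
  · rw [value_one, ← h1, hi]
  · rw [value_zero, ← h0, hi]

theorem HasCode.inner_eq (hx : IsRegularSimplex x) (hu : HasCode x u a) (hv : HasCode x v b)
    (ha : IsCode a) (hb : IsCode b) :
    ⟪u, v⟫ = (11 * (dot (List.ofFn a) (List.ofFn b) : ℝ) - 196) / 90 := by
  have hsa : ∑ i, (a i : ℝ) = 14 := mod_cast ha.sum_eq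
  have hsb : ∑ i, (b i : ℝ) = 14 := mod_cast hb.sum_eq
  have h : ∀ i, ⟪x i, u⟫ * ⟪x i, v⟫ = 121 / 900 * ((a i : ℝ) * b i) - 154 / 900 * a i
      - 154 / 900 * b i + 196 / 900 := by
    intro i
    rw [hu, hv, value, value]
    ring
  rw [hx.inner_eq_sum, Finset.sum_congr rfl fun i _ => h i, dot_ofFn]
  push_cast
  simp only [Finset.sum_add_distrib, Finset.sum_sub_distrib, ← Finset.mul_sum, hsa, hsb]
  simp
  ring

theorem HasCode.norm_eq_one (hx : IsRegularSimplex x) (hu : HasCode x u a) (ha : IsCode a) :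
    ‖u‖ = 1 := by
  have h := hu.inner_eq hx hu ha ha
  rw [ha.dot_self, real_inner_self_eq_norm_sq] at h
  norm_num at h
  rcases h with h | h
  · exact h
  · linarith [norm_nonneg u]

theorem mem_angles_iff (d : ℕ) :
    (11 * (d : ℝ) - 196) / 90 ∈ ({α1, α2, α3} : Set ℝ) ↔ admissible d = true := by
  simp only [Set.mem_insert_iff, Set.mem_singleton_iff, admissible, Bool.or_eq_true, Nat.beq_eq,
    α1, α2, α3]
  constructor
  · rintro (h | h | h)
    · exact Or.inr (by have : (d : ℝ) = 20 := by linarith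
                       exact_mod_cast this)
    · exact Or.inl (Or.inr (by have : (d : ℝ) = 17 := by linarith
                               exact_mod_cast this))
    · exact Or.inl (Or.inl (by have : (d : ℝ) = 14 := by linarith
                               exact_mod_cast this))
  · rintro ((rfl | rfl) | rfl) <;> norm_num

theorem HasCode.inner_mem_iff (hx : IsRegularSimplex x) (hu : HasCode x u a)
    (hv : HasCode x v b) (ha : IsCode a) (hb : IsCode b) :
    ⟪u, v⟫ ∈ ({α1, α2, α3} : Set ℝ) ↔ admissible (dot (List.ofFn a) (List.ofFn b)) = true := by
  rw [hu.inner_eq hx hv ha hb, mem_angles_iff]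

/-- The vector with a given code. -/
def vec (x : Fin 11 → EuclideanSpace ℝ (Fin 10)) (a : Fin 11 → ℕ) : EuclideanSpace ℝ (Fin 10) :=
  ∑ i, (10 / 11 * value (a i)) • x i

theorem hasCode_vec (hx : IsRegularSimplex x) (ha : IsCode a) : HasCode x (vec x a) a := by
  intro j
  rw [vec, hx.inner_sum_smul, ha.sum_comp fun t => 10 / 11 * value t]
  norm_num [value]
  ring

theorem hasType_of_mem_Y1set (h : u ∈ Y1set x) : HasType x u := by
  obtain ⟨-, h0, h6, h1, h3⟩ := h
  have h12 : α2 ≠ α1 := by norm_num [α1, α2]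
  have h23 : α2 ≠ α3 := by norm_num [α2, α3]
  refine ⟨?_, ?_, ?_⟩
  · rw [← h6]
    congr 1
    ext i
    simp only [Set.mem_ofPred_eq]
    exact ⟨fun h => ⟨by rintro rfl; exact h12 (h0.symm.trans h), h⟩, fun h => h.2⟩
  · have hins : {i : Fin 11 | ⟪x i, u⟫ = α2} = insert 0 {i : Fin 11 | i ≠ 0 ∧ ⟪x i, u⟫ = α2} := by
      ext i
      simp only [Set.mem_ofPred_eq, Set.mem_insert_iff]
      by_cases hi : i = 0
      · simp [hi, h0]
      · simp [hi]
    rw [hins, Set.ncard_insert_of_notMem (by simp) (Set.toFinite _), h1]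
  · rw [← h3]
    congr 1
    ext i
    simp only [Set.mem_ofPred_eq]
    exact ⟨fun h => ⟨by rintro rfl; exact h23 (h0.symm.trans h), h⟩, fun h => h.2⟩

end

/-- The vectors of a ten-clique are encoded by a configuration. -/
theorem exists_isConfig {x : Fin 11 → EuclideanSpace ℝ (Fin 10)} (hx : IsRegularSimplex x)
    {C : Set (EuclideanSpace ℝ (Fin 10))} (hC : IsClique10 x C) :
    ∃ (e : Fin 10 ≃ C) (w : Fin 10 → Fin 11 → ℕ), IsConfig w ∧ ∀ k, HasCode x (e k) (w k) := by
  obtain ⟨hY, hcard, hadj⟩ := hC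
  have : Finite C := Set.finite_of_ncard_ne_zero (by omega)
  let e : Fin 10 ≃ C := (Finite.equivFinOfCardEq hcard).symm
  choose w hw hcode using fun k => (hasType_of_mem_Y1set (hY (e k).2)).exists_code
  refine ⟨e, w, ⟨hw, fun k => ?_, fun k l hkl => ?_⟩, hcode⟩
  · apply value_injective
    rw [← hcode k 0, value_one]
    exact (hY (e k).2).2.1
  · have h := hadj _ (e k).2 _ (e l).2 (fun h => hkl (e.injective (Subtype.ext h)))
    rw [(hcode k).inner_eq hx (hcode l) (hw k) (hw l), α2] at h
    have : (dot (List.ofFn (w k)) (List.ofFn (w l)) : ℝ) = 17 := by linarith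
    exact_mod_cast this

/-- After relabelling the simplex, the set `Z` is the set of vectors whose code is one of the
admissible words. -/
theorem exists_perm_mem_Zset_iff {x : Fin 11 → EuclideanSpace ℝ (Fin 10)}
    (hx : IsRegularSimplex x) {C : Set (EuclideanSpace ℝ (Fin 10))} (hC : IsClique10 x C) :
    ∃ σ : Equiv.Perm (Fin 11), ∀ u, u ∈ Zset x C ↔
      ∃ a, List.ofFn a ∈ admissibleWords ∧ HasCode (fun i => x (σ i)) u a := by
  obtain ⟨e, w, hw, hcode⟩ := exists_isConfig hx hC
  obtain ⟨σ, hσ, hcanon⟩ := hw.exists_perm_eq_canon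
  have hy := hx.comp σ
  have hcodeσ : ∀ k, HasCode (fun i => x (σ i)) (e k) (w k ∘ σ) := fun k i => hcode k (σ i)
  have hadm : ∀ {u : EuclideanSpace ℝ (Fin 10)} {a : Fin 11 → ℕ}, IsCode a →
      HasCode (fun i => x (σ i)) u a →
      ((∀ v ∈ C, ⟪u, v⟫ ∈ ({α1, α2, α3} : Set ℝ)) ↔ List.ofFn a ∈ admissibleWords) := by
    intro u a ha hu
    simp only [admissibleWords, List.mem_filter, List.all_eq_true, hcanon]
    constructor
    · refine fun h => ⟨ha, ?_⟩
      rintro _ ⟨k, rfl⟩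
      exact (hu.inner_mem_iff hy (hcodeσ k) ha ((hw.comp hσ).isCode k)).1 (h _ (e k).2)
    · rintro ⟨-, h⟩ v hv
      obtain ⟨k, hk⟩ := e.surjective ⟨v, hv⟩
      have := (hu.inner_mem_iff hy (hcodeσ k) ha ((hw.comp hσ).isCode k)).2 (h _ ⟨k, rfl⟩)
      rwa [hk] at this
  refine ⟨σ, fun u => ⟨?_, ?_⟩⟩
  · rintro ⟨⟨-, -, htype⟩, h⟩
    obtain ⟨a, ha, hua⟩ := HasType.exists_code (x := x) htype
    have hu : HasCode (fun i => x (σ i)) u (a ∘ σ) := fun i => hua (σ i)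
    exact ⟨a ∘ σ, (hadm (ha.comp σ) hu).1 h, hu⟩
  · rintro ⟨a, hmem, hu⟩
    have ha : IsCode a := (List.mem_filter.1 hmem).1
    have hin := (hadm ha hu).2 hmem
    have hua : HasCode x u (a ∘ σ.symm) := fun i => by simpa using hu (σ.symm i)
    have hnorm := hu.norm_eq_one hy ha
    refine ⟨⟨hnorm, fun huC => ?_, hua.hasType (ha.comp σ.symm)⟩, hin⟩
    have := hin u huC
    rw [real_inner_self_eq_norm_sq, hnorm] at this
    norm_num [α1, α2, α3] at this

/-- The vectors whose codes with respect to `y` are the words in `L`. -/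
def vectorsOf (y : Fin 11 → EuclideanSpace ℝ (Fin 10)) (L : List (List ℕ)) :
    Set (EuclideanSpace ℝ (Fin 10)) :=
  {u | ∃ a, List.ofFn a ∈ L ∧ HasCode y u a}

section

variable {y : Fin 11 → EuclideanSpace ℝ (Fin 10)} {L : List (List ℕ)}

theorem inner_mem_of_pairwise (hy : IsRegularSimplex y) (hL : ∀ l ∈ L, l ∈ words 11 6 2 3)
    (hp : L.Pairwise fun u v => admissible (dot u v)) {u v : EuclideanSpace ℝ (Fin 10)}
    (hu : u ∈ vectorsOf y L) (hv : v ∈ vectorsOf y L) (huv : u ≠ v) :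
    ⟪u, v⟫ ∈ ({α1, α2, α3} : Set ℝ) := by
  obtain ⟨a, ha, hua⟩ := hu
  obtain ⟨b, hb, hvb⟩ := hv
  rw [hua.inner_mem_iff hy hvb (hL _ ha) (hL _ hb)]
  have : Std.Symm fun l m : List ℕ => admissible (dot l m) = true :=
    ⟨fun l m h => dot_comm l m ▸ h⟩
  refine hp.forall ha hb fun hab => huv ?_
  obtain rfl := List.ofFn_injective hab
  exact hy.ext_inner fun i => (hua i).trans (hvb i).symm

theorem ncard_vectorsOf (hy : IsRegularSimplex y) (hL : ∀ l ∈ L, l ∈ words 11 6 2 3)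
    (hp : L.Pairwise fun u v => admissible (dot u v)) : (vectorsOf y L).ncard = L.length := by
  have hofFn : ∀ l ∈ L, List.ofFn (fun i : Fin 11 => l.getD i 0) = l := fun l hl =>
    ofFn_getD ((mem_words (n := 11) (p := 6) (z := 2) (m := 3) rfl l).1 (hL l hl)).1
  have hcode : ∀ l ∈ L, IsCode (fun i : Fin 11 => l.getD i 0) := fun l hl => by
    rw [IsCode, hofFn l hl]
    exact hL l hl
  have hnodup : L.Nodup := by
    refine hp.imp_of_mem fun {l m} hl _ h hlm => ?_
    subst hlm
    have h26 := (hcode l hl).dot_self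
    rw [hofFn l hl] at h26
    rw [h26] at h
    exact absurd h (by decide)
  have himage : vectorsOf y L =
      (fun l : List ℕ => vec y fun i : Fin 11 => l.getD i 0) '' (L.toFinset : Set (List ℕ)) := by
    ext u
    simp only [vectorsOf, Set.mem_ofPred_eq, Set.mem_image, List.coe_toFinset]
    constructor
    · rintro ⟨a, ha, hua⟩
      refine ⟨_, ha, hy.ext_inner fun i => ?_⟩
      rw [hasCode_vec hy (hcode _ ha) i, hua i]
      exact congrArg value (getD_ofFn a i)
    · rintro ⟨l, hl, rfl⟩
      exact ⟨_, (hofFn l hl).symm ▸ hl, hasCode_vec hy (hcode l hl)⟩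
  rw [himage, Set.InjOn.ncard_image, Set.ncard_coe_finset, List.toFinset_card_of_nodup hnodup]
  intro l hl m hm hlm
  rw [List.coe_toFinset] at hl hm
  have h1 := hasCode_vec hy (hcode l hl)
  have h2 := hasCode_vec hy (hcode m hm)
  simp only at hlm
  rw [hlm] at h1
  rw [← hofFn l hl, ← hofFn m hm, h1.unique h2]

end

end SimplexCode

open SimplexCode in
/-- The set `Z` splits into two disjoint 45-element parts `Z1`, `Z2` such that
inner products of distinct vectors within a part lie in `{α1, α2, α3}`, while
inner products across the two parts do not. -/
theorem Zset_splits (x : Fin 11 → EuclideanSpace ℝ (Fin 10))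
    (hx : IsRegularSimplex x)
    (C2 : Set (EuclideanSpace ℝ (Fin 10))) (hC2 : IsClique10 x C2) :
    ∃ Z1 Z2 : Set (EuclideanSpace ℝ (Fin 10)),
      Z1 ∪ Z2 = Zset x C2 ∧ Disjoint Z1 Z2 ∧
      Z1.ncard = 45 ∧ Z2.ncard = 45 ∧
      (∀ u ∈ Z1, ∀ v ∈ Z1, u ≠ v → ⟪u, v⟫ ∈ ({α1, α2, α3} : Set ℝ)) ∧
      (∀ u ∈ Z2, ∀ v ∈ Z2, u ≠ v → ⟪u, v⟫ ∈ ({α1, α2, α3} : Set ℝ)) ∧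
      (∀ z1 ∈ Z1, ∀ z2 ∈ Z2, ⟪z1, z2⟫ ∉ ({α1, α2, α3} : Set ℝ)) := by
  obtain ⟨σ, hZ⟩ := exists_perm_mem_Zset_iff hx hC2
  have hy := hx.comp σ
  obtain ⟨hA, hB, hpA, hpB, hAB⟩ := admissibleWords_split
  have hwords : ∀ l ∈ admissibleWords, l ∈ words 11 6 2 3 := fun l hl => (List.mem_filter.1 hl).1
  have hLA := fun l hl => hwords l (List.mem_filter (p := near).1 hl).1
  have hLB := fun l hl => hwords l (List.mem_filter (p := (! near ·)).1 hl).1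
  have hcross : ∀ z1 ∈ vectorsOf (fun i => x (σ i)) (admissibleWords.filter near),
      ∀ z2 ∈ vectorsOf (fun i => x (σ i)) (admissibleWords.filter (! near ·)),
      ⟪z1, z2⟫ ∉ ({α1, α2, α3} : Set ℝ) := by
    rintro u ⟨a, ha, hua⟩ v ⟨b, hb, hvb⟩
    rw [hua.inner_mem_iff hy hvb (hLA _ ha) (hLB _ hb), hAB _ ha _ hb]
    exact Bool.false_ne_true
  refine ⟨vectorsOf (fun i => x (σ i)) (admissibleWords.filter near),
    vectorsOf (fun i => x (σ i)) (admissibleWords.filter (! near ·)), ?_, ?_, ?_, ?_,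
    fun u hu v hv => inner_mem_of_pairwise hy hLA hpA hu hv,
    fun u hu v hv => inner_mem_of_pairwise hy hLB hpB hu hv, hcross⟩
  · ext u
    rw [hZ, Set.mem_union]
    constructor
    · rintro (⟨a, ha, hu⟩ | ⟨a, ha, hu⟩) <;> exact ⟨a, (List.mem_filter.1 ha).1, hu⟩
    · rintro ⟨a, ha, hu⟩
      by_cases hn : near (List.ofFn a) = true
      · exact Or.inl ⟨a, List.mem_filter.2 ⟨ha, hn⟩, hu⟩
      · exact Or.inr ⟨a, List.mem_filter.2 ⟨ha, by simpa using hn⟩, hu⟩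
  · rw [Set.disjoint_left]
    rintro u ⟨a, ha, hua⟩ ⟨b, hb, hub⟩
    obtain rfl := hua.unique hub
    have h1 := (List.mem_filter.1 ha).2
    have h2 := (List.mem_filter.1 hb).2
    rw [h1] at h2
    exact absurd h2 (by decide)
  · rw [ncard_vectorsOf hy hLA hpA, hA]
  · rw [ncard_vectorsOf hy hLB hpB, hB]
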